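/- arXiv:2203.15765 — 6 statements merged into one kernel-verified Lean document; each statement's English description precedes it below -/
import Mathlib

section
/- For any two unit quaternions p, q ∈ S³ ⊂ ℝ⁴, the trace of γ(p)·γ(q)ᵀ equals 4(p·q)² − 1, where p·q is the Euclidean inner product in ℝ⁴. -/
open Matrix

/-- The standard map from unit quaternions `q = (w,x,y,z) ∈ S³ ⊂ ℝ⁴` to rotation matrices. -/
noncomputable def gamma (q : Fin 4 → ℝ) : Matrix (Fin 3) (Fin 3) ℝ :=
  !![1 - 2*(q 2)^2 - 2*(q 3)^2, 2*(q 1)*(q 2) - 2*(q 0)*(q 3), 2*(q 1)*(q 3) + 2*(q 0)*(q 2);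
     2*(q 1)*(q 2) + 2*(q 0)*(q 3), 1 - 2*(q 1)^2 - 2*(q 3)^2, 2*(q 2)*(q 3) - 2*(q 0)*(q 1);
     2*(q 1)*(q 3) - 2*(q 0)*(q 2), 2*(q 2)*(q 3) + 2*(q 0)*(q 1), 1 - 2*(q 1)^2 - 2*(q 2)^2]

/-- For any two unit quaternions `p, q ∈ S³ ⊂ ℝ⁴`, the trace of `γ(p)·γ(q)ᵀ` equals
`4(p·q)² − 1`, where `p·q` is the Euclidean inner product in `ℝ⁴`. -/
theorem stmt_0 (p q : Fin 4 → ℝ) (hp : ∑ i, (p i)^2 = 1) (hq : ∑ i, (q i)^2 = 1) :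
    (gamma p * (gamma q)ᵀ).trace = 4 * (∑ i, p i * q i)^2 - 1 := by
  simp only [Fin.sum_univ_four] at hp hq ⊢
  simp only [gamma, Matrix.trace, Matrix.diag, Matrix.mul_apply, Matrix.transpose_apply,
    Fin.sum_univ_three, Matrix.of_apply, Matrix.cons_val]
  -- The cross terms cancel, and the difference of the two sides is the polynomial
  -- `4 * ((1 - s) * (1 - t) - (p 0)^2 * (q 0)^2)`, where `s`, `t` are the squared norms of the
  -- imaginary parts; it vanishes because `(p 0)^2 = 1 - s` and `(q 0)^2 = 1 - t`.
  linear_combination (-4 * (q 0)^2) * hp - 4 * (1 - (p 1)^2 - (p 2)^2 - (p 3)^2) * hq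
end

section
/- Let U, V ∈ SO(3) and for i = 1,2,3,4 let mᵢ ∈ S³ ⊂ ℝ⁴ be unit quaternions with γ(mᵢ) = U Eᵢ Vᵀ. Then m₁, m₂, m₃, m₄ are mutually orthogonal in ℝ⁴ (so the 4×4 matrix with columns m₁,…,m₄ is orthogonal). -/
/-!
The double cover `γ` satisfies `tr (γ(p)ᵀ γ(q)) = 4 ⟨p, q⟩² - 1` for unit quaternions `p`, `q`
(`trace_gamma`): the left side is `1 + 2 cos θ` for the angle `θ` of the relative rotation, and
`⟨p, q⟩ = ± cos (θ / 2)`. By orthogonality of `U` and `V`, the relative rotation of `U Eᵢ Vᵀ` and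
`U Eⱼ Vᵀ` is conjugate to `Eᵢ Eⱼ`, which is a half-turn of trace `-1` when `i ≠ j`. Hence
`⟨mᵢ, mⱼ⟩² = 0`.
-/


open Matrix

/-- `E₁ = diag(1,−1,−1)`, `E₂ = diag(−1,1,−1)`, `E₃ = diag(−1,−1,1)`, `E₄ = I₃`. -/
noncomputable def EMat : Fin 4 → Matrix (Fin 3) (Fin 3) ℝ :=
  ![Matrix.diagonal ![1, -1, -1], Matrix.diagonal ![-1, 1, -1],
    Matrix.diagonal ![-1, -1, 1], 1]

/-- `R ∈ SO(3)`: a `3 × 3` real orthogonal matrix with determinant `1`. -/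
def IsSO3 (R : Matrix (Fin 3) (Fin 3) ℝ) : Prop := Rᵀ * R = 1 ∧ R.det = 1

theorem trace_gamma (p q : Fin 4 → ℝ) (hp : ∑ k, (p k)^2 = 1) (hq : ∑ k, (q k)^2 = 1) :
    ((gamma p)ᵀ * gamma q).trace = 4 * (∑ k, p k * q k)^2 - 1 := by
  simp only [Fin.sum_univ_four] at hp hq ⊢
  simp only [gamma, Matrix.trace, Matrix.diag, Matrix.mul_apply, Fin.sum_univ_three,
    Matrix.transpose_apply, Matrix.of_apply, Matrix.cons_val]
  -- The diagonal entries of `gamma` are the homogeneous quadratic ones plus `1 - ∑ qₖ²`, so each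
  -- coefficient contains the trace `3 w² - x² - y² - z²` of the homogeneous form of the other one.
  linear_combination
    (-1 - (3 * q 0 ^ 2 - q 1 ^ 2 - q 2 ^ 2 - q 3 ^ 2)
      + 2 * (q 0 ^ 2 + q 1 ^ 2 + q 2 ^ 2 + q 3 ^ 2 - 1)) * hp
    + (-1 - (3 * p 0 ^ 2 - p 1 ^ 2 - p 2 ^ 2 - p 3 ^ 2)) * hq

theorem trace_EMat_mul (i j : Fin 4) (hij : i ≠ j) : ((EMat i)ᵀ * EMat j).trace = -1 := by
  fin_cases i <;> fin_cases j <;>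
    first
    | exact absurd rfl hij
    | simp [EMat, Matrix.trace, Fin.sum_univ_three]

/-- The Frobenius inner product is invariant under multiplication by orthogonal matrices. -/
theorem trace_conj (U V A B : Matrix (Fin 3) (Fin 3) ℝ) (hU : Uᵀ * U = 1) (hV : Vᵀ * V = 1) :
    ((U * A * Vᵀ)ᵀ * (U * B * Vᵀ)).trace = (Aᵀ * B).trace := by
  have h : (U * A * Vᵀ)ᵀ * (U * B * Vᵀ) = V * (Aᵀ * (Uᵀ * U) * B * Vᵀ) := by
    simp only [Matrix.transpose_mul, Matrix.transpose_transpose, Matrix.mul_assoc]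
  rw [h, hU, Matrix.trace_mul_comm, Matrix.mul_assoc, hV, Matrix.mul_one, Matrix.mul_one]

/-- Let `U, V ∈ SO(3)` and for `i = 1,2,3,4` let `mᵢ ∈ S³ ⊂ ℝ⁴` be unit quaternions with
`γ(mᵢ) = U Eᵢ Vᵀ`. Then `m₁, m₂, m₃, m₄` are mutually orthogonal in `ℝ⁴`. -/
theorem stmt_1 (U V : Matrix (Fin 3) (Fin 3) ℝ) (hU : IsSO3 U) (hV : IsSO3 V)
    (m : Fin 4 → Fin 4 → ℝ) (hm_unit : ∀ i, ∑ k, (m i k)^2 = 1)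
    (hm : ∀ i, gamma (m i) = U * EMat i * Vᵀ) :
    ∀ i j, i ≠ j → ∑ k, m i k * m j k = 0 := by
  intro i j hij
  have h := trace_gamma (m i) (m j) (hm_unit i) (hm_unit j)
  rw [hm i, hm j, trace_conj U V _ _ hU.1 hV.1, trace_EMat_mul i j hij] at h
  exact pow_eq_zero_iff two_ne_zero |>.mp (by linarith)
end

section
/- The pushforward under γ of the uniform probability measure on the unit sphere S³ ⊂ ℝ⁴ (the surface measure normalized by its total mass 2π²) equals the Haar probability measure on SO(3). Equivalently, for every Borel set B ⊆ SO(3), the Haar probability measure of B equals (1/2π²) times the surface measure of γ⁻¹(B). -/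
/-!
The pushforward `μ` of the normalized sphere measure is invariant under left translation by every
rotation: `γ` is multiplicative for the quaternion product (`gammaH_mulVec`), left multiplication by
a unit quaternion is an orthogonal map of `ℝ⁴` (`leftMul_orthogonal`), and every rotation is of the
form `γ q` (`exists_gamma_eq`).  Since `ν` is right invariant, computing
`(ν × μ) {(R, S) | R S ∈ B}` by integrating out either variable first gives `μ B = ν B`
(`eq_of_invariant`).

Surjectivity of `γ` is obtained from the symmetric matrix `quatGram R`, affine in `R`, which equals
`4 q qᵀ` when `R = γ q` with `q` a unit vector.  For `R ∈ SO(3)` the quadratic relations `RᵀR = RRᵀ = 1` and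
`R = (adj R)ᵀ` force the `2 × 2` minors of this matrix to vanish, and its trace is `4`, so a unit
quaternion can be read off from any row with positive diagonal entry.
-/

open Matrix MeasureTheory

/-- Borel/pi measurable structure on `3 × 3` real matrices. -/
noncomputable instance : MeasurableSpace (Matrix (Fin 3) (Fin 3) ℝ) :=
  inferInstanceAs (MeasurableSpace (Fin 3 → Fin 3 → ℝ))

/-- The unit sphere `S³ ⊂ ℝ⁴`. -/
def unitSphere4 : Set (Fin 4 → ℝ) := {q | ∑ i, (q i)^2 = 1}

/-- `σ` is the surface measure on the unit sphere `S³ ⊂ ℝ⁴`: it is carried by the sphere,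
invariant under the orthogonal group `O(4)`, and has total mass `2π²`. -/
def IsSphereMeasure (σ : Measure (Fin 4 → ℝ)) : Prop :=
  σ unitSphere4ᶜ = 0 ∧ σ Set.univ = ENNReal.ofReal (2 * Real.pi ^ 2) ∧
    ∀ M : Matrix (Fin 4) (Fin 4) ℝ, Mᵀ * M = 1 → σ.map M.mulVec = σ

/-- `ν` is the Haar probability measure on `SO(3)` (viewed as a measure on `3 × 3` matrices):
a probability measure carried by `SO(3)` and invariant under left and right translation. -/
def IsHaarSO3 (ν : Measure (Matrix (Fin 3) (Fin 3) ℝ)) : Prop :=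
  ν {R | IsSO3 R}ᶜ = 0 ∧ ν Set.univ = 1 ∧
    (∀ g, IsSO3 g → ν.map (fun R => g * R) = ν) ∧
    (∀ g, IsSO3 g → ν.map (fun R => R * g) = ν)

/-- The homogeneous (quadratic) form of `γ`, equal to it on the unit sphere. -/
noncomputable def gammaH (q : Fin 4 → ℝ) : Matrix (Fin 3) (Fin 3) ℝ :=
  !![(q 0)^2 + (q 1)^2 - (q 2)^2 - (q 3)^2, 2*(q 1)*(q 2) - 2*(q 0)*(q 3),
      2*(q 1)*(q 3) + 2*(q 0)*(q 2);
     2*(q 1)*(q 2) + 2*(q 0)*(q 3), (q 0)^2 + (q 2)^2 - (q 1)^2 - (q 3)^2,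
      2*(q 2)*(q 3) - 2*(q 0)*(q 1);
     2*(q 1)*(q 3) - 2*(q 0)*(q 2), 2*(q 2)*(q 3) + 2*(q 0)*(q 1),
      (q 0)^2 + (q 3)^2 - (q 1)^2 - (q 2)^2]

/-- The matrix of left multiplication by the quaternion `q`. -/
def leftMul (q : Fin 4 → ℝ) : Matrix (Fin 4) (Fin 4) ℝ :=
  !![q 0, -q 1, -q 2, -q 3;
     q 1, q 0, -q 3, q 2;
     q 2, q 3, q 0, -q 1;
     q 3, -q 2, q 1, q 0]

/-- The symmetric matrix, affine in `R`, with entries `4 qᵢ qⱼ` when `R = γ q`, `|q| = 1`. -/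
def quatGram (R : Matrix (Fin 3) (Fin 3) ℝ) : Matrix (Fin 4) (Fin 4) ℝ :=
  !![1 + R 0 0 + R 1 1 + R 2 2, R 2 1 - R 1 2, R 0 2 - R 2 0, R 1 0 - R 0 1;
     R 2 1 - R 1 2, 1 + R 0 0 - R 1 1 - R 2 2, R 0 1 + R 1 0, R 0 2 + R 2 0;
     R 0 2 - R 2 0, R 0 1 + R 1 0, 1 - R 0 0 + R 1 1 - R 2 2, R 1 2 + R 2 1;
     R 1 0 - R 0 1, R 0 2 + R 2 0, R 1 2 + R 2 1, 1 - R 0 0 - R 1 1 + R 2 2]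

lemma unitSphere4_iff (q : Fin 4 → ℝ) :
    q ∈ unitSphere4 ↔ (q 0)^2 + (q 1)^2 + (q 2)^2 + (q 3)^2 = 1 := by
  simp [unitSphere4, Fin.sum_univ_four]

lemma gamma_eq_gammaH {q : Fin 4 → ℝ} (hq : q ∈ unitSphere4) : gamma q = gammaH q := by
  rw [unitSphere4_iff] at hq
  ext i j
  fin_cases i <;> fin_cases j <;> simp [gamma, gammaH] <;> linarith

/-- `γ` is multiplicative for the quaternion product. -/
lemma gammaH_mulVec (q p : Fin 4 → ℝ) :
    gammaH (leftMul q *ᵥ p) = gammaH q * gammaH p := by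
  ext i j
  fin_cases i <;> fin_cases j <;>
    simp [gammaH, leftMul, Matrix.mul_apply, Matrix.mulVec, dotProduct, Fin.sum_univ_succ] <;> ring

lemma leftMul_orthogonal {q : Fin 4 → ℝ} (hq : q ∈ unitSphere4) :
    (leftMul q)ᵀ * leftMul q = 1 := by
  rw [unitSphere4_iff] at hq
  ext i j
  fin_cases i <;> fin_cases j <;>
    simp [leftMul, Matrix.mul_apply, Fin.sum_univ_succ] <;> linarith

lemma leftMul_mem {q p : Fin 4 → ℝ} (hq : q ∈ unitSphere4) (hp : p ∈ unitSphere4) :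
    leftMul q *ᵥ p ∈ unitSphere4 := by
  rw [unitSphere4_iff] at *
  simp only [leftMul, Matrix.mulVec, dotProduct, Fin.sum_univ_succ]
  simp
  -- The norm of quaternions is multiplicative.
  linear_combination ((p 0)^2 + (p 1)^2 + (p 2)^2 + (p 3)^2) * hq + hp

lemma isSO3_gamma {q : Fin 4 → ℝ} (hq : q ∈ unitSphere4) : IsSO3 (gamma q) := by
  rw [gamma_eq_gammaH hq]
  rw [unitSphere4_iff] at hq
  have h2 : ((q 0)^2 + (q 1)^2 + (q 2)^2 + (q 3)^2)^2 = 1 := by rw [hq]; norm_num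
  have h3 : ((q 0)^2 + (q 1)^2 + (q 2)^2 + (q 3)^2)^3 = 1 := by rw [hq]; norm_num
  constructor
  · ext i j
    fin_cases i <;> fin_cases j <;>
      simp [gammaH, Matrix.mul_apply, Fin.sum_univ_succ] <;>
      first | ring1 | linear_combination h2
  · rw [Matrix.det_fin_three]
    simp [gammaH]
    linear_combination h3

/-- The `2 × 2` minors of `quatGram R` vanish for `R ∈ SO(3)`: they are linear combinations of the
quadratic relations `RᵀR = 1`, `RRᵀ = 1` and `adj R = Rᵀ`. -/
lemma quatGram_minor {R : Matrix (Fin 3) (Fin 3) ℝ} (hR : IsSO3 R) (i j k : Fin 4) :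
    quatGram R i j * quatGram R i k = quatGram R i i * quatGram R j k := by
  obtain ⟨h1, hd⟩ := hR
  have h2 : R * Rᵀ = 1 := mul_eq_one_comm.mp h1
  have h3 : R.adjugate = Rᵀ := by
    calc R.adjugate = (Rᵀ * R) * R.adjugate := by rw [h1, one_mul]
      _ = Rᵀ := by rw [mul_assoc, Matrix.mul_adjugate, hd, one_smul, mul_one]
  have e1 := fun a b => congrFun (congrFun h1 a) b
  have e2 := fun a b => congrFun (congrFun h2 a) b
  have e3 := fun a b => congrFun (congrFun h3 a) b
  simp only [Matrix.adjugate_fin_three, Matrix.mul_apply, Fin.sum_univ_three,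
    Matrix.transpose_apply, Fin.forall_fin_succ, Matrix.one_apply] at e1 e2 e3
  simp at e1 e2 e3
  obtain ⟨⟨a1, a2, a3⟩, ⟨a4, a5, a6⟩, a7, a8, a9⟩ := e1
  obtain ⟨⟨b1, b2, b3⟩, ⟨b4, b5, b6⟩, b7, b8, b9⟩ := e2
  obtain ⟨⟨c1, c2, c3⟩, ⟨c4, c5, c6⟩, c7, c8, c9⟩ := e3
  fin_cases i <;> fin_cases j <;> fin_cases k <;> simp [quatGram] <;>
    first | ring1 | linarith

/-- Every rotation matrix comes from a unit quaternion. -/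
lemma exists_gamma_eq {R : Matrix (Fin 3) (Fin 3) ℝ} (hR : IsSO3 R) :
    ∃ q ∈ unitSphere4, gamma q = R := by
  have htr : quatGram R 0 0 + quatGram R 1 1 + quatGram R 2 2 + quatGram R 3 3 = 4 := by
    simp [quatGram]; ring
  obtain ⟨i, hi⟩ : ∃ i, 0 < quatGram R i i := by
    by_contra! h
    linarith [h 0, h 1, h 2, h 3]
  set s := √(quatGram R i i) with hs
  have hs2 : s ^ 2 = quatGram R i i := Real.sq_sqrt hi.le
  have hs0 : s ≠ 0 := (Real.sqrt_pos.mpr hi).ne'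
  -- If `R = γ p`, row `i` of `quatGram R` is `4 pᵢ p` and `s = 2 |pᵢ|`, so this is `± p`.
  let q : Fin 4 → ℝ := fun j => quatGram R i j / (2 * s)
  have hq : ∀ j k, q j * q k = quatGram R j k / 4 := by
    intro j k
    have := quatGram_minor hR i j k
    simp only [q]
    rw [div_mul_div_comm, this, ← hs2]
    field_simp
    ring
  have hq2 : ∀ j, (q j) ^ 2 = quatGram R j j / 4 := fun j => by rw [sq, hq]
  refine ⟨q, ?_, ?_⟩
  · rw [unitSphere4_iff]
    simp only [hq2]
    linarith
  · ext a b
    fin_cases a <;> fin_cases b <;>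
      simp only [gamma, hq2, mul_assoc, hq] <;> simp [quatGram] <;> ring

lemma measurable_gamma : Measurable gamma := by
  refine measurable_pi_iff.mpr fun i => measurable_pi_iff.mpr fun j => ?_
  fin_cases i <;> fin_cases j <;> simp [gamma] <;> fun_prop

lemma measurable_entry (i j : Fin 3) :
    Measurable fun R : Matrix (Fin 3) (Fin 3) ℝ => R i j :=
  (measurable_pi_apply j).comp (measurable_pi_apply (X := fun _ : Fin 3 => Fin 3 → ℝ) i)

lemma measurable_matMul :
    Measurable fun p : Matrix (Fin 3) (Fin 3) ℝ × Matrix (Fin 3) (Fin 3) ℝ => p.1 * p.2 := by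
  refine measurable_pi_iff.mpr fun i => measurable_pi_iff.mpr fun j => ?_
  simp only [Matrix.mul_apply]
  exact Finset.measurable_sum _ fun k _ =>
    ((measurable_entry i k).comp measurable_fst).mul ((measurable_entry k j).comp measurable_snd)

lemma measurable_mulVec (M : Matrix (Fin 4) (Fin 4) ℝ) : Measurable M.mulVec := by
  refine measurable_pi_iff.mpr fun i => ?_
  simp only [Matrix.mulVec, dotProduct]
  fun_prop

/-- A left-invariant and a right-invariant probability measure carried by `SO(3)` agree. -/
lemma eq_of_invariant {μ ν : Measure (Matrix (Fin 3) (Fin 3) ℝ)}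
    (hμ1 : μ Set.univ = 1) (hν1 : ν Set.univ = 1)
    (hμS : ∀ᵐ R ∂μ, IsSO3 R) (hνS : ∀ᵐ R ∂ν, IsSO3 R)
    (hμ : ∀ g, IsSO3 g → μ.map (fun R => g * R) = μ)
    (hν : ∀ g, IsSO3 g → ν.map (fun R => R * g) = ν) : μ = ν := by
  have : IsProbabilityMeasure μ := ⟨hμ1⟩
  have : IsProbabilityMeasure ν := ⟨hν1⟩
  ext B hB
  have hA := measurable_matMul hB
  have e1 : (ν.prod μ) ((fun p => p.1 * p.2) ⁻¹' B) = μ B := by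
    rw [Measure.prod_apply hA]
    calc _ = ∫⁻ _, μ B ∂ν := by
          refine lintegral_congr_ae ?_
          filter_upwards [hνS] with R hR
          have h := Measure.map_apply (μ := μ)
            (measurable_matMul.comp (measurable_prodMk_left (x := R))) hB
          exact h.symm.trans (congrArg (· B) (hμ R hR))
      _ = μ B := by simp
  have e2 : (ν.prod μ) ((fun p => p.1 * p.2) ⁻¹' B) = ν B := by
    rw [Measure.prod_apply_symm hA]
    calc _ = ∫⁻ _, ν B ∂μ := by
          refine lintegral_congr_ae ?_
          filter_upwards [hμS] with S hS
          have h := Measure.map_apply (μ := ν)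
            (measurable_matMul.comp (measurable_prodMk_right (y := S))) hB
          exact h.symm.trans (congrArg (· B) (hν S hS))
      _ = ν B := by simp
  rw [← e1, e2]

/-- The pushforward under `γ` of the uniform probability measure on `S³` (the surface measure
normalized by its total mass `2π²`) equals the Haar probability measure on `SO(3)`:
for every Borel set `B ⊆ SO(3)`, `ν B = (1/2π²) · σ (γ⁻¹ B)`. -/
theorem stmt_4 (σ : Measure (Fin 4 → ℝ)) (hσ : IsSphereMeasure σ)
    (ν : Measure (Matrix (Fin 3) (Fin 3) ℝ)) (hν : IsHaarSO3 ν) :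
    (((ENNReal.ofReal (2 * Real.pi ^ 2))⁻¹ • σ).map gamma = ν) ∧
      ∀ B : Set (Matrix (Fin 3) (Fin 3) ℝ), MeasurableSet B →
        ν B = (ENNReal.ofReal (2 * Real.pi ^ 2))⁻¹ * σ (gamma ⁻¹' B) := by
  obtain ⟨hσS, hσ1, hσinv⟩ := hσ
  obtain ⟨hνS, hν1, -, hνr⟩ := hν
  have hae : ∀ᵐ q ∂σ, q ∈ unitSphere4 := mem_ae_iff.mpr hσS
  have hc : ENNReal.ofReal (2 * Real.pi ^ 2) ≠ 0 := by
    rw [ENNReal.ofReal_ne_zero_iff]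
    positivity
  set c := (ENNReal.ofReal (2 * Real.pi ^ 2))⁻¹
  have hinv : ∀ g, IsSO3 g → (σ.map gamma).map (fun R => g * R) = σ.map gamma := by
    intro g hg
    obtain ⟨q, hq, rfl⟩ := exists_gamma_eq hg
    have hm : Measurable fun R : Matrix (Fin 3) (Fin 3) ℝ => gamma q * R :=
      measurable_matMul.comp measurable_prodMk_left
    rw [Measure.map_map hm measurable_gamma]
    conv_rhs => rw [← hσinv _ (leftMul_orthogonal hq),
      Measure.map_map measurable_gamma (measurable_mulVec _)]
    refine Measure.map_congr ?_
    filter_upwards [hae] with p hp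
    simp only [Function.comp_apply]
    rw [gamma_eq_gammaH (leftMul_mem hq hp), gammaH_mulVec, gamma_eq_gammaH hq, gamma_eq_gammaH hp]
  have hmeas : MeasurableSet {R : Matrix (Fin 3) (Fin 3) ℝ | IsSO3 R} := by
    have : {R : Matrix (Fin 3) (Fin 3) ℝ | IsSO3 R} =
        (⋂ i, ⋂ j, {R | (Rᵀ * R) i j = (1 : Matrix (Fin 3) (Fin 3) ℝ) i j}) ∩ {R | R.det = 1} := by
      ext R
      simp [IsSO3, ← Matrix.ext_iff]
    rw [this]
    refine (MeasurableSet.iInter fun i => MeasurableSet.iInter fun j => ?_).inter ?_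
    · simp only [Matrix.mul_apply, Matrix.transpose_apply]
      exact measurableSet_eq_fun (Finset.measurable_sum _ fun k _ =>
        (measurable_entry k i).mul (measurable_entry k j)) measurable_const
    · simp only [Matrix.det_fin_three]
      have := measurable_entry
      exact measurableSet_eq_fun (by fun_prop) measurable_const
  have key : (c • σ).map gamma = ν := by
    refine eq_of_invariant ?_ hν1 ?_ (mem_ae_iff.mpr hνS) ?_ hνr
    · rw [Measure.map_apply measurable_gamma MeasurableSet.univ]
      rw [Set.preimage_univ, Measure.smul_apply, hσ1, smul_eq_mul]
      exact ENNReal.inv_mul_cancel hc ENNReal.ofReal_ne_top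
    · rw [Measure.map_smul]
      refine Measure.ae_smul_measure ?_ c
      rw [ae_map_iff measurable_gamma.aemeasurable hmeas]
      filter_upwards [hae] with q hq using isSO3_gamma hq
    · intro g hg
      rw [Measure.map_smul, Measure.map_smul, hinv g hg]
  refine ⟨key, fun B hB => ?_⟩
  rw [← key, Measure.map_apply measurable_gamma hB]
  rfl
end

section
/- Let M ∈ O(4) have columns v₁, v₂, v₃, v₄ and let z ∈ ℝ⁴. For all indices i ≠ j, the mixed projected moment of the Bingham density vanishes: ∮_{S³} (vᵢ·q)(vⱼ·q) exp(Σₖ zₖ (vₖ·q)²) dq = 0, where dq is the surface measure on the unit sphere S³ ⊂ ℝ⁴. -/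
/-!
The reflection `q ↦ q - 2 (vᵢ·q) vᵢ` in the hyperplane orthogonal to `vᵢ` is orthogonal, so it
preserves the surface measure. It flips the sign of `vᵢ·q` and fixes `vₗ·q` for `l ≠ i`, so the
integrand, which is odd in `vᵢ·q` when `j ≠ i`, changes sign. The integral is therefore equal to
its own negative.
-/

open Matrix MeasureTheory

/-- The reflection of `ℝ⁴` in the hyperplane orthogonal to `u`, as the matrix `1 - 2 u uᵀ`; it is
the orthogonal reflection only when `u` is a unit vector. -/
def reflMat (u : Fin 4 → ℝ) : Matrix (Fin 4) (Fin 4) ℝ := 1 - (2 : ℝ) • vecMulVec u u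

lemma reflMat_mulVec (u q : Fin 4 → ℝ) : reflMat u *ᵥ q = q - (2 * (u ⬝ᵥ q)) • u := by
  rw [reflMat, sub_mulVec, one_mulVec, smul_mulVec, vecMulVec_mulVec]
  ext k
  simp
  ring

lemma reflMat_transpose_mul_self {u : Fin 4 → ℝ} (hu : u ⬝ᵥ u = 1) :
    (reflMat u)ᵀ * reflMat u = 1 := by
  have ht : (reflMat u)ᵀ = reflMat u := by
    simp [reflMat, transpose_vecMulVec]
  have hsq : vecMulVec u u * vecMulVec u u = vecMulVec u u := by
    rw [vecMulVec_mul_vecMulVec, hu, one_smul]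
  rw [ht, reflMat, sub_mul, mul_sub, mul_sub, smul_mul_smul_comm, hsq, one_mul, mul_one, one_mul]
  module

/-- For all indices `i ≠ j`, the mixed projected moment of the (unnormalized) Bingham density
vanishes: `∮_{S³} (vᵢ·q)(vⱼ·q) exp(Σₖ zₖ (vₖ·q)²) dq = 0`, where `v₁,…,v₄` are the columns of
an orthogonal matrix `M ∈ O(4)`. -/
theorem stmt_10 (σ : Measure (Fin 4 → ℝ)) (hσ : IsSphereMeasure σ)
    (v : Fin 4 → Fin 4 → ℝ) (hv : ∀ i j, (∑ k, v i k * v j k) = if i = j then 1 else 0)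
    (z : Fin 4 → ℝ) (i j : Fin 4) (hij : i ≠ j) :
    ∫ q, (∑ k, v i k * q k) * (∑ k, v j k * q k) *
        Real.exp (∑ l, z l * (∑ k, v l k * q k)^2) ∂σ = 0 := by
  have hii : v i ⬝ᵥ v i = 1 := by simpa [dotProduct] using hv i i
  have hproj (l : Fin 4) (q : Fin 4 → ℝ) : ∑ k, v l k * (reflMat (v i) *ᵥ q) k =
      if l = i then -∑ k, v i k * q k else ∑ k, v l k * q k := by
    change v l ⬝ᵥ _ = if l = i then -(v i ⬝ᵥ q) else v l ⬝ᵥ q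
    rw [reflMat_mulVec, dotProduct_sub, dotProduct_smul, smul_eq_mul]
    have h : v l ⬝ᵥ v i = if l = i then 1 else 0 := hv l i
    rw [h]
    split_ifs with hl
    · subst hl
      ring
    · ring
  have hodd (q : Fin 4 → ℝ) :
      (∑ k, v i k * (reflMat (v i) *ᵥ q) k) * (∑ k, v j k * (reflMat (v i) *ᵥ q) k) *
        Real.exp (∑ l, z l * (∑ k, v l k * (reflMat (v i) *ᵥ q) k) ^ 2) =
      -((∑ k, v i k * q k) * (∑ k, v j k * q k) *
        Real.exp (∑ l, z l * (∑ k, v l k * q k) ^ 2)) := by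
    have hsq (l : Fin 4) : (∑ k, v l k * (reflMat (v i) *ᵥ q) k) ^ 2 =
        (∑ k, v l k * q k) ^ 2 := by
      rw [hproj]
      split_ifs with hl
      · rw [hl, neg_sq]
      · rfl
    simp only [hsq]
    rw [hproj i, hproj j, if_pos rfl, if_neg hij.symm]
    ring
  have hmeas : Measurable (reflMat (v i)).mulVec :=
    (Continuous.matrix_mulVec continuous_const continuous_id).measurable
  have hF : Continuous fun q : Fin 4 → ℝ => (∑ k, v i k * q k) * (∑ k, v j k * q k) *
      Real.exp (∑ l, z l * (∑ k, v l k * q k) ^ 2) := by fun_prop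
  have hmap := integral_map (μ := σ) hmeas.aemeasurable hF.aestronglyMeasurable
  rw [hσ.2.2 _ (reflMat_transpose_mul_self hii)] at hmap
  simp only [hodd, integral_neg] at hmap
  linarith
end

section
/- Let M_f, M_g ∈ O(4) with columns v_{f1},…,v_{f4} and v_{g1},…,v_{g4}, let z_f, z_g ∈ ℝ⁴, and let f and g be the corresponding Bingham densities with normalizing constants F_f(z_f) and F_g(z_g). Set a_{ij} = v_{gi}·v_{fj}. Then the cross entropy of f relative to g with respect to the surface measure on S³ satisfies H(f,g) = −∮_{S³} f log g dq = log F_g(z_g) − Σᵢ₌₁⁴ z_{gi} Σⱼ₌₁⁴ a_{ij}² · (∂F_f/∂z_{fj})(z_f) / F_f(z_f). -/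
/-!
The logarithm of a Bingham density is a quadratic form minus the constant `log F`, so the cross
entropy reduces to the second moments of `f` in the directions `vg i`. Expanding `vg i` in the
orthonormal basis `vf` (`form_expand`), the cross moments `∮ f (vf j·q)(vf k·q) dq`, `j ≠ k`,
vanish: the reflection in the hyperplane `(vf j)ᗮ` preserves the sphere measure and the density
and flips the sign of the integrand (`cross_moment`). The diagonal moments are the logarithmic
derivatives of `F`, by differentiation under the integral sign (`deriv_binghamF`). All integrals
converge because the measure is finite and carried by a compact set (`integrable_of_continuous`).
-/

open Matrix MeasureTheory

/-- The Bingham normalizing constant `F(z) = ∮_{S³} exp(Σᵢ zᵢ (vᵢ·q)²) dq`, where `v₁,…,v₄`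
are the columns of an orthogonal matrix `M ∈ O(4)`. -/
noncomputable def binghamF (σ : Measure (Fin 4 → ℝ)) (v : Fin 4 → Fin 4 → ℝ)
    (z : Fin 4 → ℝ) : ℝ :=
  ∫ q, Real.exp (∑ i, z i * (∑ k, v i k * q k)^2) ∂σ

theorem isCompact_unitSphere4 : IsCompact unitSphere4 := by
  refine Metric.isCompact_of_isClosed_isBounded ?_ ?_
  · exact isClosed_eq (by fun_prop) continuous_const
  · refine (Metric.isBounded_closedBall (x := (0 : Fin 4 → ℝ)) (r := 1)).subset ?_
    intro q hq
    rw [mem_closedBall_zero_iff, pi_norm_le_iff_of_nonneg zero_le_one]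
    intro k
    have hk : (q k) ^ 2 ≤ 1 := by
      rw [← (show ∑ i, (q i) ^ 2 = 1 from hq)]
      exact Finset.single_le_sum (f := fun i => (q i) ^ 2) (fun i _ => sq_nonneg _)
        (Finset.mem_univ k)
    rw [Real.norm_eq_abs]
    exact (sq_le_one_iff_abs_le_one _).1 hk

theorem IsSphereMeasure.isFiniteMeasure {σ : Measure (Fin 4 → ℝ)} (hσ : IsSphereMeasure σ) :
    IsFiniteMeasure σ :=
  ⟨by rw [hσ.2.1]; exact ENNReal.ofReal_lt_top⟩

theorem IsSphereMeasure.neZero {σ : Measure (Fin 4 → ℝ)} (hσ : IsSphereMeasure σ) :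
    NeZero σ := by
  refine ⟨fun h => ?_⟩
  have h1 := hσ.2.1
  have h2 : 0 < ENNReal.ofReal (2 * Real.pi ^ 2) := ENNReal.ofReal_pos.2 (by positivity)
  rw [← h1, h] at h2
  simp at h2

theorem integrable_of_continuous {σ : Measure (Fin 4 → ℝ)} (hσ : IsSphereMeasure σ)
    {h : (Fin 4 → ℝ) → ℝ} (hh : Continuous h) : Integrable h σ := by
  have := hσ.isFiniteMeasure
  have h1 : IntegrableOn h unitSphere4 σ :=
    hh.continuousOn.integrableOn_compact isCompact_unitSphere4
  have h2 : σ.restrict unitSphere4 = σ :=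
    Measure.restrict_eq_self_of_ae_mem (by rw [ae_iff]; exact hσ.1)
  rwa [IntegrableOn, h2] at h1

theorem binghamF_pos {σ : Measure (Fin 4 → ℝ)} (hσ : IsSphereMeasure σ)
    (v : Fin 4 → Fin 4 → ℝ) (z : Fin 4 → ℝ) : 0 < binghamF σ v z := by
  have := hσ.neZero
  exact integral_exp_pos (integrable_of_continuous hσ (by fun_prop))

/-- Differentiation under the integral sign. On the unit ball around `t₀` the derivative
`w * exp (S + t * w)` is dominated by its value at `t₀ + 1`, since `w ≥ 0`. -/
theorem hasDerivAt_integral_exp {σ : Measure (Fin 4 → ℝ)} (hσ : IsSphereMeasure σ)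
    {S w : (Fin 4 → ℝ) → ℝ} (hS : Continuous S) (hw : Continuous w) (hw0 : ∀ q, 0 ≤ w q)
    (t₀ : ℝ) :
    HasDerivAt (fun t => ∫ q, Real.exp (S q + t * w q) ∂σ)
      (∫ q, w q * Real.exp (S q + t₀ * w q) ∂σ) t₀ := by
  refine (hasDerivAt_integral_of_dominated_loc_of_deriv_le
    (F := fun t q => Real.exp (S q + t * w q))
    (F' := fun t q => w q * Real.exp (S q + t * w q))
    (bound := fun q => w q * Real.exp (S q + (t₀ + 1) * w q))
    (Metric.ball_mem_nhds t₀ one_pos) ?_ ?_ ?_ ?_ ?_ ?_).2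
  · exact Filter.Eventually.of_forall fun t =>
      (integrable_of_continuous hσ (by fun_prop)).aestronglyMeasurable
  · exact integrable_of_continuous hσ (by fun_prop)
  · exact (integrable_of_continuous hσ (by fun_prop)).aestronglyMeasurable
  · refine Filter.Eventually.of_forall fun q t ht => ?_
    have ht' : t ≤ t₀ + 1 := by
      rw [Metric.mem_ball, Real.dist_eq] at ht
      linarith [(abs_lt.1 ht).2]
    rw [Real.norm_eq_abs, abs_of_nonneg (mul_nonneg (hw0 q) (Real.exp_pos _).le)]
    have := hw0 q
    gcongr
  · exact integrable_of_continuous hσ (by fun_prop)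
  · refine Filter.Eventually.of_forall fun q t _ => ?_
    have h1 : HasDerivAt (fun t => S q + t * w q) (w q) t := by
      simpa using ((hasDerivAt_id t).mul_const (w q)).const_add (S q)
    simpa [mul_comm] using h1.exp

theorem deriv_binghamF {σ : Measure (Fin 4 → ℝ)} (hσ : IsSphereMeasure σ)
    (v : Fin 4 → Fin 4 → ℝ) (z : Fin 4 → ℝ) (j : Fin 4) :
    deriv (fun t => binghamF σ v (Function.update z j t)) (z j)
      = ∫ q, (∑ k, v j k * q k) ^ 2 * Real.exp (∑ i, z i * (∑ k, v i k * q k) ^ 2) ∂σ := by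
  have key : ∀ (t : ℝ) (q : Fin 4 → ℝ), ∑ i, Function.update z j t i * (∑ k, v i k * q k) ^ 2
      = ∑ i ∈ Finset.univ.erase j, z i * (∑ k, v i k * q k) ^ 2
        + t * (∑ k, v j k * q k) ^ 2 := by
    intro t q
    rw [← Finset.sum_erase_add _ _ (Finset.mem_univ j), Function.update_self]
    congr 1
    refine Finset.sum_congr rfl fun i hi => ?_
    rw [Function.update_of_ne (Finset.ne_of_mem_erase hi)]
  have h := hasDerivAt_integral_exp hσ
    (S := fun q => ∑ i ∈ Finset.univ.erase j, z i * (∑ k, v i k * q k) ^ 2)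
    (w := fun q => (∑ k, v j k * q k) ^ 2) (by fun_prop) (by fun_prop)
    (fun q => sq_nonneg _) (z j)
  simp only [← key, Function.update_eq_self] at h
  exact h.deriv

/-- The reflection in the hyperplane orthogonal to `v j` is an orthogonal matrix that negates
the `j`-th coordinate in the orthonormal basis `v` and fixes the others. -/
theorem exists_reflection {v : Fin 4 → Fin 4 → ℝ}
    (hv : ∀ i j, (∑ k, v i k * v j k) = if i = j then 1 else 0) (j : Fin 4) :
    ∃ R : Matrix (Fin 4) (Fin 4) ℝ, Rᵀ * R = 1 ∧
      ∀ i q, ∑ k, v i k * (R *ᵥ q) k = (if i = j then -1 else 1) * ∑ k, v i k * q k := by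
  have hdot : ∀ i, v i ⬝ᵥ v j = if i = j then 1 else 0 := fun i => hv i j
  refine ⟨1 - (2 : ℝ) • vecMulVec (v j) (v j), ?_, fun i q => ?_⟩
  · have h1 : vecMulVec (v j) (v j) * vecMulVec (v j) (v j) = vecMulVec (v j) (v j) := by
      rw [vecMulVec_mul_vecMulVec, hdot j, if_pos rfl]
      simp
    have h2 : (vecMulVec (v j) (v j))ᵀ = vecMulVec (v j) (v j) := transpose_vecMulVec _ _
    rw [transpose_sub, transpose_smul, transpose_one, h2, sub_mul, mul_sub, mul_sub]
    simp only [Matrix.one_mul, Matrix.mul_one, Matrix.smul_mul, Matrix.mul_smul, h1]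
    module
  · change v i ⬝ᵥ _ = _ * (v i ⬝ᵥ q)
    rw [sub_mulVec, one_mulVec, smul_mulVec, vecMulVec_mulVec, dotProduct_sub, dotProduct_smul]
    have h3 : v i ⬝ᵥ (MulOpposite.op (v j ⬝ᵥ q) • v j) = (v j ⬝ᵥ q) * (v i ⬝ᵥ v j) := by
      rw [op_smul_eq_smul, dotProduct_smul, smul_eq_mul]
    rw [h3, hdot i]
    by_cases h : i = j
    · subst h
      simp
      ring
    · simp [h]

/-- The integrand is odd under the reflection of `exists_reflection`, which preserves `σ`. -/
theorem cross_moment {σ : Measure (Fin 4 → ℝ)} (hσ : IsSphereMeasure σ)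
    {v : Fin 4 → Fin 4 → ℝ}
    (hv : ∀ i j, (∑ k, v i k * v j k) = if i = j then 1 else 0) (z : Fin 4 → ℝ)
    {j l : Fin 4} (hjl : j ≠ l) :
    ∫ q, (∑ k, v j k * q k) * (∑ k, v l k * q k)
      * Real.exp (∑ i, z i * (∑ k, v i k * q k) ^ 2) ∂σ = 0 := by
  obtain ⟨R, hR, hRv⟩ := exists_reflection hv j
  set h : (Fin 4 → ℝ) → ℝ := fun q => (∑ k, v j k * q k) * (∑ k, v l k * q k)
      * Real.exp (∑ i, z i * (∑ k, v i k * q k) ^ 2) with hh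
  have hc : Continuous h := by fun_prop
  have hodd : ∀ q, h (R *ᵥ q) = -h q := by
    intro q
    have hsq : ∀ i, (∑ k, v i k * (R *ᵥ q) k) ^ 2 = (∑ k, v i k * q k) ^ 2 := by
      intro i
      rw [hRv, mul_pow]
      split_ifs <;> norm_num
    simp only [hh, hsq]
    rw [hRv j, hRv l, if_pos rfl, if_neg hjl.symm]
    ring
  have hmeas : Continuous R.mulVec := by
    change Continuous fun q => R *ᵥ q
    fun_prop
  have h1 : ∫ q, h q ∂σ = ∫ q, h (R *ᵥ q) ∂σ := by
    conv_lhs => rw [← hσ.2.2 R hR]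
    exact integral_map hmeas.measurable.aemeasurable hc.aestronglyMeasurable
  simp only [hodd, integral_neg] at h1
  change ∫ q, h q ∂σ = 0
  linarith

/-- Expansion of the linear form `u·q` in the orthonormal basis `v`. -/
theorem form_expand {v : Fin 4 → Fin 4 → ℝ}
    (hv : ∀ i j, (∑ k, v i k * v j k) = if i = j then 1 else 0) (u q : Fin 4 → ℝ) :
    ∑ k, u k * q k = ∑ j, (∑ k, u k * v j k) * ∑ k, v j k * q k := by
  have h1 : (Matrix.of v) * (Matrix.of v)ᵀ = 1 := by
    ext i j
    simp [Matrix.mul_apply, hv, Matrix.one_apply]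
  have h2 : (Matrix.of v)ᵀ * (Matrix.of v) = 1 := mul_eq_one_comm.1 h1
  change u ⬝ᵥ q = (fun j => u ⬝ᵥ v j) ⬝ᵥ (Matrix.of v *ᵥ q)
  have h3 : (fun j => u ⬝ᵥ v j) = u ᵥ* (Matrix.of v)ᵀ := rfl
  rw [h3, dotProduct_mulVec, vecMul_vecMul, h2, vecMul_one]

/-- The unnormalized second moment of a Bingham density in an arbitrary direction `u`. -/
theorem second_moment {σ : Measure (Fin 4 → ℝ)} (hσ : IsSphereMeasure σ)
    {v : Fin 4 → Fin 4 → ℝ}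
    (hv : ∀ i j, (∑ k, v i k * v j k) = if i = j then 1 else 0) (z u : Fin 4 → ℝ) :
    ∫ q, (∑ k, u k * q k) ^ 2 * Real.exp (∑ i, z i * (∑ k, v i k * q k) ^ 2) ∂σ
      = ∑ j, (∑ k, u k * v j k) ^ 2
          * deriv (fun t => binghamF σ v (Function.update z j t)) (z j) := by
  have h1 : ∀ q : Fin 4 → ℝ,
      (∑ k, u k * q k) ^ 2 * Real.exp (∑ i, z i * (∑ k, v i k * q k) ^ 2)
        = ∑ j, ∑ l, (∑ k, u k * v j k) * (∑ k, u k * v l k)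
          * ((∑ k, v j k * q k) * (∑ k, v l k * q k)
            * Real.exp (∑ i, z i * (∑ k, v i k * q k) ^ 2)) := by
    intro q
    rw [form_expand hv u q, sq, Finset.sum_mul_sum, Finset.sum_mul]
    refine Finset.sum_congr rfl fun j _ => ?_
    rw [Finset.sum_mul]
    refine Finset.sum_congr rfl fun l _ => ?_
    ring
  simp only [h1]
  rw [integral_finsetSum _ fun j _ => integrable_of_continuous hσ (by fun_prop)]
  refine Finset.sum_congr rfl fun j _ => ?_
  rw [integral_finsetSum _ fun l _ => integrable_of_continuous hσ (by fun_prop)]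
  rw [Finset.sum_eq_single j]
  · rw [integral_const_mul, deriv_binghamF hσ]
    simp only [sq]
  · intro l _ hl
    rw [integral_const_mul, cross_moment hσ hv z hl.symm, mul_zero]
  · simp

/-- The cross entropy between two Bingham densities `f` and `g` (with orientation columns
`v_f`, `v_g`, concentrations `z_f`, `z_g`, and `a_{ij} = v_{gi}·v_{fj}`) satisfies
`H(f,g) = −∮_{S³} f log g dq
  = log F_g(z_g) − Σᵢ z_{gi} Σⱼ a_{ij}² (∂F_f/∂z_{fj})(z_f) / F_f(z_f)`. -/
theorem stmt_12 (σ : Measure (Fin 4 → ℝ)) (hσ : IsSphereMeasure σ)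
    (vf vg : Fin 4 → Fin 4 → ℝ)
    (hvf : ∀ i j, (∑ k, vf i k * vf j k) = if i = j then 1 else 0)
    (hvg : ∀ i j, (∑ k, vg i k * vg j k) = if i = j then 1 else 0)
    (zf zg : Fin 4 → ℝ)
    (a : Fin 4 → Fin 4 → ℝ) (ha : ∀ i j, a i j = ∑ k, vg i k * vf j k) :
    -∫ q, (Real.exp (∑ i, zf i * (∑ k, vf i k * q k)^2) / binghamF σ vf zf) *
          Real.log (Real.exp (∑ i, zg i * (∑ k, vg i k * q k)^2) / binghamF σ vg zg) ∂σ
      = Real.log (binghamF σ vg zg)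
        - ∑ i, zg i * ∑ j, (a i j)^2 *
            ((deriv (fun t => binghamF σ vf (Function.update zf j t)) (zf j))
              / binghamF σ vf zf) := by
  have hF := binghamF_pos hσ vf zf
  have hG := binghamF_pos hσ vg zg
  have h1 : ∀ q : Fin 4 → ℝ,
      (Real.exp (∑ i, zf i * (∑ k, vf i k * q k)^2) / binghamF σ vf zf) *
        Real.log (Real.exp (∑ i, zg i * (∑ k, vg i k * q k)^2) / binghamF σ vg zg)
      = (∑ i, zg i / binghamF σ vf zf * ((∑ k, vg i k * q k)^2
          * Real.exp (∑ i, zf i * (∑ k, vf i k * q k)^2)))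
        - Real.log (binghamF σ vg zg) / binghamF σ vf zf
          * Real.exp (∑ i, zf i * (∑ k, vf i k * q k)^2) := by
    intro q
    rw [Real.log_div (Real.exp_pos _).ne' hG.ne', Real.log_exp, mul_sub, Finset.mul_sum]
    congr 1
    · exact Finset.sum_congr rfl fun i _ => by ring
    · ring
  simp only [h1]
  rw [integral_sub (integrable_of_continuous hσ (by fun_prop))
      (integrable_of_continuous hσ (by fun_prop)),
    integral_finsetSum _ fun i _ => integrable_of_continuous hσ (by fun_prop)]
  simp only [integral_const_mul, second_moment hσ hvf]
  have h2 : ∫ q, Real.exp (∑ i, zf i * (∑ k, vf i k * q k)^2) ∂σ = binghamF σ vf zf := rfl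
  rw [h2, div_mul_cancel₀ _ hF.ne', neg_sub]
  congr 1
  refine Finset.sum_congr rfl fun i _ => ?_
  rw [Finset.mul_sum, Finset.mul_sum]
  refine Finset.sum_congr rfl fun j _ => ?_
  rw [ha]
  ring
end

section
/- Let A ∈ ℝ^{3×3} have a singular value decomposition A = U diag(s₁,s₂,s₃) Vᵀ with U, V ∈ O(3) and s₁ ≥ s₂ ≥ s₃ ≥ 0. Then the function R ↦ tr(Aᵀ R) on SO(3) attains its maximum over SO(3) at R̂ = U · diag(1, 1, det(U V)) · Vᵀ; that is, R̂ ∈ SO(3) and tr(Aᵀ R) ≤ tr(Aᵀ R̂) = s₁ + s₂ + det(UV)·s₃ for all R ∈ SO(3). -/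
/-!
Put `Q = Uᵀ R V`. This is orthogonal with `det Q = det (U V) = d = ±1`, and
`tr (Aᵀ R) = s₀ Q₀₀ + s₁ Q₁₁ + s₂ Q₂₂`. Summation by parts rewrites this as
`(s₀ - s₁) Q₀₀ + (s₁ - s₂) (Q₀₀ + Q₁₁) + s₂ tr Q` with nonnegative coefficients. The diagonal entries
of an orthogonal matrix are at most `1`, so the bound `s₀ + s₁ + d s₂` follows from `tr Q ≤ 2 + d`.
This is immediate for `d = 1`; for `d = -1` it says that an improper orthogonal matrix has trace at
most `1` (`trace_le_one_of_det_neg_one`). At `R = R̂` the matrix `Q` is `diag(1, 1, d)`, which gives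
the value of the maximum.
-/

open Matrix

lemma diag_le_one_of_orthogonal {Q : Matrix (Fin 3) (Fin 3) ℝ} (hQ : Qᵀ * Q = 1) (i : Fin 3) :
    Q i i ≤ 1 := by
  have h := congrFun (congrFun hQ i) i
  simp only [mul_apply, transpose_apply, one_apply_eq] at h
  have h1 : Q i i * Q i i ≤ ∑ j, Q j i * Q j i :=
    Finset.single_le_sum (f := fun j => Q j i * Q j i)
      (fun j _ => mul_self_nonneg _) (Finset.mem_univ i)
  nlinarith

/-- With `t = tr Q`, the relations `adj Q = -Qᵀ` and `∑ Qᵢⱼ² = 3` give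
`(1 - t)² + ∑_{i<j} (Qᵢⱼ - Qⱼᵢ)² = 4 (1 - t)`, so `1 - t ≥ 0`. -/
lemma trace_le_one_of_det_neg_one {Q : Matrix (Fin 3) (Fin 3) ℝ} (hQ : Qᵀ * Q = 1)
    (hd : Q.det = -1) : Q 0 0 + Q 1 1 + Q 2 2 ≤ 1 := by
  have hadj : Q.adjugate = -Qᵀ := by
    calc Q.adjugate = Qᵀ * Q * Q.adjugate := by rw [hQ, one_mul]
      _ = -Qᵀ := by rw [Matrix.mul_assoc, mul_adjugate, hd]; simp
  have h0 := congrFun (congrFun hadj 0) 0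
  have h1 := congrFun (congrFun hadj 1) 1
  have h2 := congrFun (congrFun hadj 2) 2
  have k0 := congrFun (congrFun hQ 0) 0
  have k1 := congrFun (congrFun hQ 1) 1
  have k2 := congrFun (congrFun hQ 2) 2
  simp [adjugate_fin_three] at h0 h1 h2
  simp only [mul_apply, transpose_apply, one_apply_eq, Fin.sum_univ_three] at k0 k1 k2
  nlinarith [sq_nonneg (1 - (Q 0 0 + Q 1 1 + Q 2 2)), sq_nonneg (Q 0 1 - Q 1 0),
    sq_nonneg (Q 0 2 - Q 2 0), sq_nonneg (Q 1 2 - Q 2 1)]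

lemma det_sq_of_orthogonal {Q : Matrix (Fin 3) (Fin 3) ℝ} (hQ : Qᵀ * Q = 1) :
    Q.det * Q.det = 1 := by
  have h := congrArg det hQ
  rwa [det_mul, det_transpose, det_one] at h

lemma weighted_diag_le {Q : Matrix (Fin 3) (Fin 3) ℝ} (hQ : Qᵀ * Q = 1)
    (s : Fin 3 → ℝ) (hs12 : s 0 ≥ s 1) (hs23 : s 1 ≥ s 2) (hs3 : s 2 ≥ 0) :
    s 0 * Q 0 0 + s 1 * Q 1 1 + s 2 * Q 2 2 ≤ s 0 + s 1 + Q.det * s 2 := by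
  have h0 := diag_le_one_of_orthogonal hQ 0
  have h1 := diag_le_one_of_orthogonal hQ 1
  have h2 := diag_le_one_of_orthogonal hQ 2
  have ht : Q 0 0 + Q 1 1 + Q 2 2 ≤ 2 + Q.det := by
    rcases mul_self_eq_one_iff.mp (det_sq_of_orthogonal hQ) with hd | hd
    · linarith
    · linarith [trace_le_one_of_det_neg_one hQ hd]
  linarith [mul_le_mul_of_nonneg_left h0 (sub_nonneg.mpr hs12),
    mul_le_mul_of_nonneg_left (add_le_add h0 h1) (sub_nonneg.mpr hs23),
    mul_le_mul_of_nonneg_left ht hs3]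

lemma trace_svd_mul (U V R : Matrix (Fin 3) (Fin 3) ℝ) (s : Fin 3 → ℝ) :
    ((U * diagonal s * Vᵀ)ᵀ * R).trace =
      s 0 * (Uᵀ * R * V) 0 0 + s 1 * (Uᵀ * R * V) 1 1 + s 2 * (Uᵀ * R * V) 2 2 := by
  have h : ((U * diagonal s * Vᵀ)ᵀ * R).trace = (diagonal s * (Uᵀ * R * V)).trace := by
    rw [transpose_mul, transpose_mul, transpose_transpose, diagonal_transpose,
      Matrix.mul_assoc, trace_mul_comm]
    simp only [Matrix.mul_assoc]
  rw [h]
  simp [trace, Fin.sum_univ_three, diagonal_mul]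

/-- Let `A = U diag(s₁,s₂,s₃) Vᵀ` with `U, V ∈ O(3)` and `s₁ ≥ s₂ ≥ s₃ ≥ 0`. Then the function
`R ↦ tr(Aᵀ R)` on `SO(3)` attains its maximum at `R̂ = U diag(1, 1, det(U V)) Vᵀ`; that is,
`R̂ ∈ SO(3)` and `tr(Aᵀ R) ≤ tr(Aᵀ R̂) = s₁ + s₂ + det(UV)·s₃` for all `R ∈ SO(3)`. -/
theorem stmt_17 (U V : Matrix (Fin 3) (Fin 3) ℝ) (hU : Uᵀ * U = 1) (hV : Vᵀ * V = 1)
    (s : Fin 3 → ℝ) (hs12 : s 0 ≥ s 1) (hs23 : s 1 ≥ s 2) (hs3 : s 2 ≥ 0)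
    (A : Matrix (Fin 3) (Fin 3) ℝ) (hA : A = U * Matrix.diagonal s * Vᵀ)
    (Rhat : Matrix (Fin 3) (Fin 3) ℝ)
    (hRhat : Rhat = U * Matrix.diagonal ![1, 1, (U * V).det] * Vᵀ) :
    IsSO3 Rhat ∧ (∀ R, IsSO3 R → (Aᵀ * R).trace ≤ (Aᵀ * Rhat).trace) ∧
      (Aᵀ * Rhat).trace = s 0 + s 1 + (U * V).det * s 2 := by
  have hV' : V * Vᵀ = 1 := mul_eq_one_comm.mp hV
  have hdd : (U * V).det * (U * V).det = 1 := by
    rw [det_mul]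
    linear_combination V.det * V.det * det_sq_of_orthogonal hU + det_sq_of_orthogonal hV
  have hval : (Aᵀ * Rhat).trace = s 0 + s 1 + (U * V).det * s 2 := by
    have hQ : Uᵀ * Rhat * V = diagonal ![1, 1, (U * V).det] := by
      calc Uᵀ * Rhat * V = (Uᵀ * U) * diagonal ![1, 1, (U * V).det] * (Vᵀ * V) := by
            rw [hRhat]; simp only [Matrix.mul_assoc]
        _ = _ := by rw [hU, hV, one_mul, mul_one]
    rw [hA, trace_svd_mul, hQ]
    simp [mul_comm]
  refine ⟨⟨?_, ?_⟩, fun R hR => ?_, hval⟩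
  · have hD : diagonal ![1, 1, (U * V).det] * diagonal ![1, 1, (U * V).det] = 1 := by
      rw [diagonal_mul_diagonal, ← diagonal_one]
      congr 1
      funext i
      fin_cases i
      · simp
      · simp
      · exact hdd
    calc Rhatᵀ * Rhat
        = V * (diagonal ![1, 1, (U * V).det] * (Uᵀ * U) * diagonal ![1, 1, (U * V).det]) * Vᵀ := by
          rw [hRhat]
          simp only [transpose_mul, transpose_transpose, diagonal_transpose, Matrix.mul_assoc]
      _ = 1 := by rw [hU, mul_one, hD, mul_one, hV']
  · rw [hRhat, det_mul, det_mul, det_transpose, det_diagonal, Fin.prod_univ_three]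
    rw [det_mul] at hdd
    simp only [det_mul, cons_val]
    linear_combination hdd
  · have hU' : U * Uᵀ = 1 := mul_eq_one_comm.mp hU
    have hQ : (Uᵀ * R * V)ᵀ * (Uᵀ * R * V) = 1 := by
      calc (Uᵀ * R * V)ᵀ * (Uᵀ * R * V) = Vᵀ * (Rᵀ * (U * Uᵀ) * R) * V := by
            simp only [transpose_mul, transpose_transpose, Matrix.mul_assoc]
        _ = 1 := by rw [hU', mul_one, hR.1, mul_one, hV]
    have hdet : (Uᵀ * R * V).det = (U * V).det := by
      rw [det_mul, det_mul, det_transpose, hR.2, mul_one, det_mul]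
    rw [hval, hA, trace_svd_mul, ← hdet]
    exact weighted_diag_le hQ s hs12 hs23 hs3
end
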